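/- arXiv:1105.2549 — 3 statements merged into one kernel-verified Lean document; each statement's English description precedes it below -/
import Mathlib

section
/- Let j_1, j_2 ≥ 2 be integers, let k ≥ 1, and let σ_1, σ_2 be permutations of {1,…,k} with σ_1 ∘ σ_2 = (1,2,…,k) (the standard k-cycle). Suppose σ_2 has exactly two cycles c_1 and c_2, and that σ_1 has exactly j_1 + j_2 − 2 cycles. Then it is impossible that simultaneously the cycle c_1 intersects at most j_1 − 1 cycles of σ_1 and the cycle c_2 intersects at most j_2 − 1 cycles of σ_1. -/
/-- The set of cycles of a permutation `σ` of `{1,…,k}` (orbits, including fixed points),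
each cycle given as the `Finset` of its elements. -/
def cycles {k : ℕ} (σ : Equiv.Perm (Fin k)) : Finset (Finset (Fin k)) :=
  Finset.univ.image fun x => Finset.univ.filter fun y => σ.SameCycle x y

theorem mem_cycles_iff_aux {k : ℕ} (σ : Equiv.Perm (Fin k)) (c : Finset (Fin k))
    (hc : c ∈ cycles σ) (x : Fin k) (hx : x ∈ c) :
    c = Finset.univ.filter fun y => σ.SameCycle x y := by
  unfold cycles at hc
  rw [Finset.mem_image] at hc
  obtain ⟨z, -, rfl⟩ := hc
  have hzx : σ.SameCycle z x := by simpa using hx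
  ext y
  simp only [Finset.mem_filter, Finset.mem_univ, true_and]
  exact ⟨fun h => hzx.symm.trans h, fun h => hzx.trans h⟩

theorem cyc_mem_aux {k : ℕ} (σ : Equiv.Perm (Fin k)) (x : Fin k) :
    (Finset.univ.filter fun y => σ.SameCycle x y) ∈ cycles σ :=
  Finset.mem_image_of_mem _ (Finset.mem_univ x)

theorem cycles_nonempty_aux {k : ℕ} (σ : Equiv.Perm (Fin k)) (c : Finset (Fin k))
    (hc : c ∈ cycles σ) : ∃ x, x ∈ c := by
  unfold cycles at hc
  rw [Finset.mem_image] at hc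
  obtain ⟨z, -, rfl⟩ := hc
  exact ⟨z, by simp [Equiv.Perm.SameCycle.refl]⟩

theorem rotate_closed_aux {k : ℕ} (c : Finset (Fin k)) (x : Fin k) (hx : x ∈ c)
    (h : ∀ y ∈ c, finRotate k y ∈ c) (y : Fin k) : y ∈ c := by
  cases k with
  | zero => exact x.elim0
  | succ n =>
    have key : ∀ m : ℕ, x + (Fin.ofNat (n+1) m) ∈ c := by
      intro m
      induction m with
      | zero =>
        have : x + Fin.ofNat (n+1) 0 = x := by ext; simp [Fin.val_add, Nat.mod_eq_of_lt]
        rwa [this]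
      | succ m ih =>
        have h2 := h _ ih
        rw [finRotate_succ_apply] at h2
        have : x + Fin.ofNat (n+1) m + 1 = x + Fin.ofNat (n+1) (m+1) := by
          ext; simp [Fin.val_add, add_assoc]
        rwa [this] at h2
    have := key (y - x).val
    have e : x + Fin.ofNat (n+1) (y - x).val = y := by
      simp
    rwa [e] at this

/-- let `j_1, j_2 ≥ 2`, `σ₁ σ₂ = (1,…,k)`, `σ₂` with exactly the two cycles
`c₁ ≠ c₂` and `σ₁` with exactly `j_1 + j_2 − 2` cycles.  Then it cannot happen that
simultaneously `c₁` intersects at most `j_1 − 1` cycles of `σ₁` and `c₂` intersects at most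
`j_2 − 1` cycles of `σ₁`. -/
theorem stmt_9 (k j₁ j₂ : ℕ) (hk : 1 ≤ k) (hj₁ : 2 ≤ j₁) (hj₂ : 2 ≤ j₂)
    (σ₁ σ₂ : Equiv.Perm (Fin k)) (hfact : σ₁ * σ₂ = finRotate k)
    (c₁ c₂ : Finset (Fin k)) (hc₁ : c₁ ∈ cycles σ₂) (hc₂ : c₂ ∈ cycles σ₂)
    (hne : c₁ ≠ c₂) (hcard₂ : (cycles σ₂).card = 2)
    (hcard₁ : (cycles σ₁).card = j₁ + j₂ - 2) :
    ¬(((cycles σ₁).filter (fun b => (c₁ ∩ b).Nonempty)).card ≤ j₁ - 1 ∧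
      ((cycles σ₁).filter (fun b => (c₂ ∩ b).Nonempty)).card ≤ j₂ - 1) := by
  rintro ⟨h1, h2⟩
  have hall : ∀ x, x ∈ c₁ ∨ x ∈ c₂ := by
    intro x
    have hs : ({c₁, c₂} : Finset (Finset (Fin k))) = cycles σ₂ := by
      apply Finset.eq_of_subset_of_card_le
      · intro c hc
        simp only [Finset.mem_insert, Finset.mem_singleton] at hc
        rcases hc with rfl | rfl <;> assumption
      · rw [hcard₂, Finset.card_pair hne]
    have hm := cyc_mem_aux σ₂ x
    have hx : x ∈ Finset.univ.filter fun y => σ₂.SameCycle x y := by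
      simp [Equiv.Perm.SameCycle.refl]
    rw [← hs] at hm
    simp only [Finset.mem_insert, Finset.mem_singleton] at hm
    rcases hm with hm | hm
    · left; rwa [hm] at hx
    · right; rwa [hm] at hx
  have hcard := Finset.card_union_add_card_inter
    ((cycles σ₁).filter (fun b => (c₁ ∩ b).Nonempty))
    ((cycles σ₁).filter (fun b => (c₂ ∩ b).Nonempty))
  have hunion : ((cycles σ₁).filter (fun b => (c₁ ∩ b).Nonempty)) ∪
      ((cycles σ₁).filter (fun b => (c₂ ∩ b).Nonempty)) = cycles σ₁ := by
    ext b
    simp only [Finset.mem_union, Finset.mem_filter]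
    constructor
    · rintro (h | h) <;> exact h.1
    · intro hb
      obtain ⟨x, hx⟩ := cycles_nonempty_aux σ₁ b hb
      rcases hall x with h | h
      · exact Or.inl ⟨hb, x, Finset.mem_inter.2 ⟨h, hx⟩⟩
      · exact Or.inr ⟨hb, x, Finset.mem_inter.2 ⟨h, hx⟩⟩
  rw [hunion] at hcard
  have hzero : (((cycles σ₁).filter (fun b => (c₁ ∩ b).Nonempty)) ∩
      ((cycles σ₁).filter (fun b => (c₂ ∩ b).Nonempty))).card = 0 := by omega
  rw [Finset.card_eq_zero] at hzero
  have hcl1 : ∀ x ∈ c₁, σ₁ x ∈ c₁ := by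
    intro x hx
    rcases hall (σ₁ x) with h | h
    · exact h
    · exfalso
      have hm : (Finset.univ.filter fun y => σ₁.SameCycle x y) ∈
          (((cycles σ₁).filter (fun b => (c₁ ∩ b).Nonempty)) ∩
          ((cycles σ₁).filter (fun b => (c₂ ∩ b).Nonempty))) := by
        rw [Finset.mem_inter, Finset.mem_filter, Finset.mem_filter]
        refine ⟨⟨cyc_mem_aux σ₁ x, x, ?_⟩, ⟨cyc_mem_aux σ₁ x, σ₁ x, ?_⟩⟩
        · simp [hx, Equiv.Perm.SameCycle.refl]
        · simp [h, Equiv.Perm.SameCycle.refl]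
      rw [hzero] at hm
      simp at hm
  have hcl2 : ∀ x ∈ c₁, σ₂ x ∈ c₁ := by
    intro x hx
    rw [mem_cycles_iff_aux σ₂ c₁ hc₁ x hx]
    simp [Equiv.Perm.SameCycle.refl]
  obtain ⟨x, hx⟩ := cycles_nonempty_aux σ₂ c₁ hc₁
  obtain ⟨y, hy⟩ := cycles_nonempty_aux σ₂ c₂ hc₂
  have hy1 : y ∈ c₁ := by
    apply rotate_closed_aux c₁ x hx
    intro z hz
    rw [← hfact]
    exact hcl1 _ (hcl2 _ hz)
  exact hne ((mem_cycles_iff_aux σ₂ c₁ hc₁ y hy1).trans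
    (mem_cycles_iff_aux σ₂ c₂ hc₂ y hy).symm)
end

section
/- Let k ≥ 1 be an integer and let σ_1, σ_2 be permutations of {1,…,k} with σ_1 ∘ σ_2 = (1,2,…,k) (the standard k-cycle). Then |C(σ_1)| + |C(σ_2)| ≤ k + 1, where |C(σ)| denotes the number of cycles of σ (orbits of σ on {1,…,k}, including fixed points). -/
/-- The projection sending a point to its cycle. -/
def cycProj {k : ℕ} (σ : Equiv.Perm (Fin k)) (x : Fin k) : {c // c ∈ cycles σ} :=
  ⟨Finset.univ.filter fun y => σ.SameCycle x y, Finset.mem_image_of_mem _ (Finset.mem_univ x)⟩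

theorem cycProj_surj {k : ℕ} (σ : Equiv.Perm (Fin k)) : Function.Surjective (cycProj σ) := by
  rintro ⟨c, hc⟩
  obtain ⟨x, -, hx⟩ := Finset.mem_image.1 hc
  exact ⟨x, Subtype.ext hx⟩

theorem cycProj_apply {k : ℕ} (σ : Equiv.Perm (Fin k)) (x : Fin k) :
    cycProj σ (σ x) = cycProj σ x := by
  apply Subtype.ext
  ext y
  simp [cycProj]

/-- The space of functions constant on the cycles. -/
noncomputable def cycFun {k : ℕ} (σ : Equiv.Perm (Fin k)) : Submodule ℚ (Fin k → ℚ) :=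
  LinearMap.range (LinearMap.funLeft ℚ ℚ (cycProj σ))

theorem finrank_cycFun {k : ℕ} (σ : Equiv.Perm (Fin k)) :
    Module.finrank ℚ (cycFun σ) = (cycles σ).card := by
  unfold cycFun
  rw [LinearMap.finrank_range_of_inj
    (LinearMap.funLeft_injective_of_surjective ℚ ℚ _ (cycProj_surj σ))]
  simp

theorem cycFun_apply {k : ℕ} (σ : Equiv.Perm (Fin k)) {f : Fin k → ℚ} (hf : f ∈ cycFun σ)
    (x : Fin k) : f (σ x) = f x := by
  obtain ⟨g, rfl⟩ := hf
  simp [LinearMap.funLeft_apply, cycProj_apply]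

/-- if `σ₁ σ₂ = (1,2,…,k)` then `|C(σ₁)| + |C(σ₂)| ≤ k + 1`. -/
theorem stmt_11 (k : ℕ) (hk : 1 ≤ k) (σ₁ σ₂ : Equiv.Perm (Fin k))
    (hfact : σ₁ * σ₂ = finRotate k) :
    (cycles σ₁).card + (cycles σ₂).card ≤ k + 1 := by
  rw [← finrank_cycFun, ← finrank_cycFun, ← Submodule.finrank_sup_add_finrank_inf_eq]
  have h1 : Module.finrank ℚ ↥(cycFun σ₁ ⊔ cycFun σ₂) ≤ k := by
    simpa using Submodule.finrank_le (cycFun σ₁ ⊔ cycFun σ₂)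
  have h2 : cycFun σ₁ ⊓ cycFun σ₂ ≤ Submodule.span ℚ {fun _ => (1 : ℚ)} := by
    rintro f ⟨hf1, hf2⟩
    obtain ⟨n, rfl⟩ : ∃ n, k = n + 1 := ⟨k - 1, by omega⟩
    have hr : ∀ x, f (finRotate (n + 1) x) = f x := fun x => by
      rw [← hfact, Equiv.Perm.mul_apply, cycFun_apply σ₁ hf1, cycFun_apply σ₂ hf2]
    have hc : ∀ x, f x = f 0 := by
      intro x
      induction x using Fin.induction with
      | zero => rfl
      | succ i ih =>
        have := hr i.castSucc
        rw [finRotate_succ_apply, Fin.coeSucc_eq_succ] at this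
        rw [this, ih]
    rw [Submodule.mem_span_singleton]
    exact ⟨f 0, by ext x; simp [hc x]⟩
  have h3 := (Submodule.finrank_mono h2).trans ((finrank_span_le_card _).trans (by simp : _ ≤ 1))
  omega
end

section
/- Let 𝕐 be the set of generalized Young diagrams, and for each integer k ≥ 2 let S_k : 𝕐 → ℝ be the fundamental functional of shape. Let F : 𝕐 → ℝ belong to the ℝ-subalgebra of functions 𝕐 → ℝ generated by the functionals {S_k : k ≥ 2}. Then for every m ≥ 1 there exists a polynomial W with real coefficients in 2m variables such that for all nonnegative reals p_1,…,p_m and all reals q_1 ≥ q_2 ≥ ⋯ ≥ q_m ≥ 0, F(p × q) = W(p_1,…,p_m,q_1,…,q_m), where p × q ∈ 𝕐 is the multirectangular generalized Young diagram defined by (p × q)(x) = Σ_{j : x < q_j} p_j. -/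
open MeasureTheory

/-- A generalized Young diagram in the French convention: a function `f : ℝ → ℝ` which is
nonnegative, non-increasing on `[0,∞)`, and has compact support there (the values on
`(-∞,0)` are irrelevant; boundedness on `[0,∞)` follows from monotonicity). -/
def GYD : Type :=
  {f : ℝ → ℝ // (∀ x, 0 ≤ f x) ∧ (∀ x y, 0 ≤ x → x ≤ y → f y ≤ f x) ∧
    ∃ M, ∀ x, M ≤ x → f x = 0}

/-- The fundamental functional of shape
`S_k(f) = (k−1) ∬_{{(x,y) : x ≥ 0, 0 ≤ y ≤ f(x)}} (x−y)^{k−2} dx dy`. -/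
noncomputable def Sfun (k : ℕ) : GYD → ℝ := fun f =>
  ((k : ℝ) - 1) *
    ∫ z in {z : ℝ × ℝ | 0 ≤ z.1 ∧ 0 ≤ z.2 ∧ z.2 ≤ f.1 z.1},
      (z.1 - z.2) ^ (k - 2) ∂(volume : Measure (ℝ × ℝ))

lemma rect_int (n : ℕ) (a b q : ℝ) (hab : a ≤ b) (hq : 0 ≤ q) :
    ∫ z in Set.Ico 0 q ×ˢ Set.Ioc a b, (z.1 - z.2) ^ n ∂(volume : Measure (ℝ × ℝ)) =
      (((n : ℝ) + 1) * (n + 2))⁻¹ *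
        ((q - a) ^ (n + 2) - (-a) ^ (n + 2) - (q - b) ^ (n + 2) + (-b) ^ (n + 2)) := by
  have hpow : ∀ (c u v : ℝ) (k : ℕ), ∫ x in u..v, (x - c) ^ k =
      ((v - c) ^ (k + 1) - (u - c) ^ (k + 1)) / (k + 1) := by
    intro c u v k
    rw [intervalIntegral.integral_comp_sub_right (fun x => x ^ k) c, integral_pow]
  have hin : ∀ x : ℝ, ∫ y in Set.Ioc a b, (x - y) ^ n =
      ((x - a) ^ (n + 1) - (x - b) ^ (n + 1)) / (n + 1) := by
    intro x
    rw [← intervalIntegral.integral_of_le hab,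
      intervalIntegral.integral_comp_sub_left (fun x => x ^ n) x, integral_pow]
  have hint : IntegrableOn (fun z : ℝ × ℝ => (z.1 - z.2) ^ n)
      (Set.Ico 0 q ×ˢ Set.Ioc a b) (volume : Measure (ℝ × ℝ)) := by
    have hc : Continuous (fun z : ℝ × ℝ => (z.1 - z.2) ^ n) := by fun_prop
    exact (hc.continuousOn.integrableOn_compact (isCompact_Icc.prod isCompact_Icc)).mono_set
      (Set.prod_mono Set.Ico_subset_Icc_self Set.Ioc_subset_Icc_self)
  rw [Measure.volume_eq_prod] at hint ⊢
  rw [setIntegral_prod _ hint]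
  simp only [hin]
  rw [integral_Ico_eq_integral_Ioc, ← intervalIntegral.integral_of_le hq,
    intervalIntegral.integral_div, intervalIntegral.integral_sub, hpow, hpow]
  · push_cast
    have h1 : (n : ℝ) + 1 ≠ 0 := by positivity
    have h2 : (n : ℝ) + 2 ≠ 0 := by positivity
    have h3 : (n : ℝ) + 1 + 1 ≠ 0 := by positivity
    field_simp
    ring
  · exact Continuous.intervalIntegrable (by fun_prop) _ _
  · exact Continuous.intervalIntegrable (by fun_prop) _ _

lemma region_eq (m : ℕ) (p q : Fin m → ℝ) (hp : ∀ i, 0 ≤ p i) (hq : ∀ i j, i ≤ j → q j ≤ q i)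
    (f : ℝ → ℝ)
    (hf : ∀ x, 0 ≤ x → f x = ∑ j : Fin m, if x < q j then p j else 0) :
    {z : ℝ × ℝ | 0 ≤ z.1 ∧ 0 < z.2 ∧ z.2 ≤ f z.1} =
      ⋃ j : Fin m, Set.Ico 0 (q j) ×ˢ
        Set.Ioc (∑ i ∈ Finset.Iio j, p i) (∑ i ∈ Finset.Iic j, p i) := by
  classical
  ext ⟨x, y⟩
  simp only [Set.mem_ofPred_eq, Set.mem_iUnion, Set.mem_prod, Set.mem_Ico, Set.mem_Ioc]
  constructor
  · rintro ⟨hx, hy, hyf⟩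
    rw [hf x hx, ← Finset.sum_filter] at hyf
    set T := Finset.univ.filter (fun j => x < q j) with hT
    have hTne : T.Nonempty := by
      by_contra h
      rw [Finset.not_nonempty_iff_eq_empty] at h
      rw [h] at hyf
      simp at hyf
      linarith
    have ht : x < q (T.max' hTne) := (Finset.mem_filter.1 (T.max'_mem hTne)).2
    have h1 : y ≤ ∑ i ∈ Finset.Iic (T.max' hTne), p i :=
      hyf.trans (Finset.sum_le_sum_of_subset_of_nonneg
        (fun i hi => Finset.mem_Iic.2 (T.le_max' i hi)) (fun i _ _ => hp i))
    let K := Finset.univ.filter (fun k => y ≤ ∑ i ∈ Finset.Iic k, p i)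
    have hKne : K.Nonempty := ⟨T.max' hTne, by simpa [K] using h1⟩
    have hk := (Finset.mem_filter.1 (K.min'_mem hKne)).2
    have hkt : K.min' hKne ≤ T.max' hTne := K.min'_le _ (by simpa [K] using h1)
    refine ⟨K.min' hKne, ⟨hx, ht.trans_le (hq _ _ hkt)⟩, ?_, hk⟩
    by_contra hlt
    push Not at hlt
    have hne : (Finset.Iio (K.min' hKne)).Nonempty := by
      by_contra h
      rw [Finset.not_nonempty_iff_eq_empty] at h
      rw [h] at hlt
      simp at hlt
      linarith
    have h2 : y ≤ ∑ i ∈ Finset.Iic ((Finset.Iio (K.min' hKne)).max' hne), p i :=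
      hlt.trans (Finset.sum_le_sum_of_subset_of_nonneg
        (fun i hi => Finset.mem_Iic.2 (Finset.le_max' _ i hi)) (fun i _ _ => hp i))
    have h3 : K.min' hKne ≤ (Finset.Iio (K.min' hKne)).max' hne :=
      K.min'_le _ (by simpa [K] using h2)
    have h4 := Finset.mem_Iio.1 (Finset.max'_mem _ hne)
    exact absurd h3 (not_le.2 h4)
  · rintro ⟨j, ⟨hx, hxq⟩, hy1, hy2⟩
    refine ⟨hx, (Finset.sum_nonneg fun i _ => hp i).trans_lt hy1, hy2.trans ?_⟩
    rw [hf x hx, ← Finset.sum_filter]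
    refine Finset.sum_le_sum_of_subset_of_nonneg (fun i hi => ?_) (fun i _ _ => hp i)
    simp only [Finset.mem_filter, Finset.mem_univ, true_and]
    exact hxq.trans_le (hq _ _ (Finset.mem_Iic.1 hi))

lemma Sfun_formula (k m : ℕ) (p q : Fin m → ℝ) (hp : ∀ i, 0 ≤ p i)
    (hq : ∀ i j, i ≤ j → q j ≤ q i) (hq0 : ∀ i, 0 ≤ q i) (f : GYD)
    (hf : ∀ x, 0 ≤ x → f.1 x = ∑ j : Fin m, if x < q j then p j else 0) :
    Sfun k f = ((k : ℝ) - 1) * ∑ j : Fin m, ((((k - 2 : ℕ) : ℝ) + 1) * (((k - 2 : ℕ) : ℝ) + 2))⁻¹ *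
        ((q j - ∑ i ∈ Finset.Iio j, p i) ^ (k - 2 + 2) - (-∑ i ∈ Finset.Iio j, p i) ^ (k - 2 + 2)
          - (q j - ∑ i ∈ Finset.Iic j, p i) ^ (k - 2 + 2)
          + (-∑ i ∈ Finset.Iic j, p i) ^ (k - 2 + 2)) := by
  have hae : ({z : ℝ × ℝ | 0 ≤ z.1 ∧ 0 ≤ z.2 ∧ z.2 ≤ f.1 z.1} : Set (ℝ × ℝ)) =ᵐ[volume]
      {z : ℝ × ℝ | 0 ≤ z.1 ∧ 0 < z.2 ∧ z.2 ≤ f.1 z.1} := by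
    have h0 : ∀ᵐ z : ℝ × ℝ, z.2 ≠ 0 := by
      have : (volume : Measure (ℝ × ℝ)) (Set.univ ×ˢ {(0 : ℝ)}) = 0 := by
        rw [Measure.volume_eq_prod, Measure.prod_prod]; simp
      refine measure_mono_null ?_ this
      rintro ⟨x, y⟩ h
      simpa using h
    filter_upwards [h0] with z hz
    apply propext
    constructor
    · rintro ⟨a, b, c⟩
      exact ⟨a, lt_of_le_of_ne b hz.symm, c⟩
    · rintro ⟨a, b, c⟩
      exact ⟨a, b.le, c⟩
  unfold Sfun
  rw [setIntegral_congr_set hae, region_eq m p q hp hq f.1 hf, integral_iUnion_fintype]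
  · congr 1
    refine Finset.sum_congr rfl fun j _ => rect_int _ _ _ _ ?_ (hq0 j)
    exact Finset.sum_le_sum_of_subset_of_nonneg
      (fun i hi => Finset.mem_Iic.2 (Finset.mem_Iio.1 hi).le) (fun i _ _ => hp i)
  · intro j
    exact measurableSet_Ico.prod measurableSet_Ioc
  · have key : ∀ i j : Fin m, i < j → Disjoint
        (Set.Ico 0 (q i) ×ˢ Set.Ioc (∑ l ∈ Finset.Iio i, p l) (∑ l ∈ Finset.Iic i, p l))
        (Set.Ico 0 (q j) ×ˢ Set.Ioc (∑ l ∈ Finset.Iio j, p l) (∑ l ∈ Finset.Iic j, p l)) := by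
      intro i j hij
      rw [Set.disjoint_left]
      rintro ⟨x, y⟩ ⟨_, h1⟩ ⟨_, h2⟩
      have h3 : ∑ l ∈ Finset.Iic i, p l ≤ ∑ l ∈ Finset.Iio j, p l :=
        Finset.sum_le_sum_of_subset_of_nonneg
          (fun l hl => Finset.mem_Iio.2 ((Finset.mem_Iic.1 hl).trans_lt hij)) (fun l _ _ => hp l)
      exact absurd (h1.2.trans h3) (not_le.2 h2.1)
    intro i j hij
    rcases lt_or_gt_of_ne hij with h | h
    · exact key i j h
    · exact (key j i h).symm
  · intro j
    have hc : Continuous (fun z : ℝ × ℝ => (z.1 - z.2) ^ (k - 2)) := by fun_prop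
    exact (hc.continuousOn.integrableOn_compact (isCompact_Icc.prod isCompact_Icc)).mono_set
      (Set.prod_mono Set.Ico_subset_Icc_self Set.Ioc_subset_Icc_self)

/-- any `F : 𝕐 → ℝ` in the ℝ-subalgebra of functions generated by the
fundamental functionals `{S_k : k ≥ 2}` admits, for every `m ≥ 1`, a Stanley polynomial `W`
in `2m` variables such that `F(p × q) = W(p_1,…,p_m,q_1,…,q_m)` for all `p_i ≥ 0` and
`q_1 ≥ ⋯ ≥ q_m ≥ 0`, where `p × q` is the multirectangular generalized Young diagram
`(p × q)(x) = Σ_{j : x < q_j} p_j`. -/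
theorem stmt_14 (F : GYD → ℝ)
    (hF : F ∈ Algebra.adjoin ℝ {g : GYD → ℝ | ∃ k, 2 ≤ k ∧ g = Sfun k})
    (m : ℕ) (hm : 1 ≤ m) :
    ∃ W : MvPolynomial (Fin m ⊕ Fin m) ℝ,
      ∀ (p q : Fin m → ℝ), (∀ i, 0 ≤ p i) → (∀ i j, i ≤ j → q j ≤ q i) →
        (∀ i, 0 ≤ q i) →
        ∀ f : GYD, (∀ x, 0 ≤ x → f.1 x = ∑ j : Fin m, if x < q j then p j else 0) →
          F f = MvPolynomial.eval (Sum.elim p q) W := by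
  induction hF using Algebra.adjoin_induction with
  | mem g hg =>
    obtain ⟨k, hk, rfl⟩ := hg
    let P : Fin m → MvPolynomial (Fin m ⊕ Fin m) ℝ := fun i => MvPolynomial.X (Sum.inl i)
    let Q : Fin m → MvPolynomial (Fin m ⊕ Fin m) ℝ := fun i => MvPolynomial.X (Sum.inr i)
    refine ⟨MvPolynomial.C ((k : ℝ) - 1) * ∑ j : Fin m,
      MvPolynomial.C ((((k - 2 : ℕ) : ℝ) + 1) * (((k - 2 : ℕ) : ℝ) + 2))⁻¹ *
        ((Q j - ∑ i ∈ Finset.Iio j, P i) ^ (k - 2 + 2) - (-∑ i ∈ Finset.Iio j, P i) ^ (k - 2 + 2)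
          - (Q j - ∑ i ∈ Finset.Iic j, P i) ^ (k - 2 + 2)
          + (-∑ i ∈ Finset.Iic j, P i) ^ (k - 2 + 2)), ?_⟩
    intro p q hp hq hq0 f hf
    rw [Sfun_formula k m p q hp hq hq0 f hf]
    simp only [P, Q, map_mul, map_sum, map_add, map_sub, map_pow, map_neg, MvPolynomial.eval_C,
      MvPolynomial.eval_X, Sum.elim_inl, Sum.elim_inr]
  | algebraMap r =>
    refine ⟨MvPolynomial.C r, fun p q _ _ _ f _ => ?_⟩
    simp
  | add g h _ _ ihg ihh =>
    obtain ⟨U, hU⟩ := ihg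
    obtain ⟨V, hV⟩ := ihh
    refine ⟨U + V, fun p q hp hq hq0 f hf => ?_⟩
    rw [map_add, ← hU p q hp hq hq0 f hf, ← hV p q hp hq hq0 f hf, Pi.add_apply]
  | mul g h _ _ ihg ihh =>
    obtain ⟨U, hU⟩ := ihg
    obtain ⟨V, hV⟩ := ihh
    refine ⟨U * V, fun p q hp hq hq0 f hf => ?_⟩
    rw [map_mul, ← hU p q hp hq hq0 f hf, ← hV p q hp hq hq0 f hf, Pi.mul_apply]
end
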